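/- arXiv:2504.10120 — 3 statements merged into one kernel-verified Lean document; each statement's English description precedes it below -/
import Mathlib

section
/- Let Ω be a finite probability space, and let X : Ω → 𝒳 and Y : Ω → 𝒴 be random variables with 𝒳, 𝒴 finite and nonempty. Then for any function f : 𝒴 → 𝒵 into a finite set 𝒵, the average min-entropy satisfies H̃∞(X | Y) ≤ H̃∞(X | f(Y)). -/
open Finset Real

/-- Probability of an event `E` under the weight function `p` on a finite sample space. -/
noncomputable def pr {Ω : Type*} [Fintype Ω] (p : Ω → ℝ) (E : Set Ω) : ℝ :=
  ∑ ω, E.indicator p ω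

/-- `P[X = x]`. -/
noncomputable def prEq {Ω 𝒳 : Type*} [Fintype Ω] (p : Ω → ℝ) (X : Ω → 𝒳) (x : 𝒳) : ℝ :=
  pr p {ω | X ω = x}

/-- `P[X = x | Y = y]`, taken to be `0` when `P[Y = y] = 0`. -/
noncomputable def condProb {Ω 𝒳 𝒴 : Type*} [Fintype Ω]
    (p : Ω → ℝ) (X : Ω → 𝒳) (x : 𝒳) (Y : Ω → 𝒴) (y : 𝒴) : ℝ :=
  if prEq p Y y = 0 then 0 else pr p {ω | X ω = x ∧ Y ω = y} / prEq p Y y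

/-- Average min-entropy `H̃∞(X | Y)`. -/
noncomputable def avgMinEntropy {Ω 𝒳 𝒴 : Type*} [Fintype Ω]
    [Fintype 𝒳] [Nonempty 𝒳] [Fintype 𝒴]
    (p : Ω → ℝ) (X : Ω → 𝒳) (Y : Ω → 𝒴) : ℝ :=
  - Real.logb 2 (∑ y : 𝒴, prEq p Y y *
      (Finset.univ.sup' Finset.univ_nonempty fun x : 𝒳 => condProb p X x Y y))

/-- Min-entropy `H∞(X)`. -/
noncomputable def minEntropy {Ω 𝒳 : Type*} [Fintype Ω] [Fintype 𝒳] [Nonempty 𝒳]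
    (p : Ω → ℝ) (X : Ω → 𝒳) : ℝ :=
  - Real.logb 2 (Finset.univ.sup' Finset.univ_nonempty fun x : 𝒳 => prEq p X x)

/-! The number inside the logarithm of `H̃∞(X | Y)` is the best probability of guessing `X` after
seeing `Y`. Any strategy that guesses `X` from `f(Y)` can also be played by someone who sees `Y`,
so passing from `Y` to `f(Y)` can only lower it; it stays positive because guessing the most likely
value of `X` already succeeds with positive probability. -/

section Probability

variable {Ω 𝒳 𝒴 : Type*} [Fintype Ω] {p : Ω → ℝ}

theorem pr_nonneg (hp : ∀ ω, 0 ≤ p ω) (E : Set Ω) : 0 ≤ pr p E :=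
  sum_nonneg fun ω _ => Set.indicator_nonneg (fun ω _ => hp ω) ω

theorem pr_mono (hp : ∀ ω, 0 ≤ p ω) {E F : Set Ω} (hEF : E ⊆ F) : pr p E ≤ pr p F :=
  sum_le_sum fun ω _ => Set.indicator_le_indicator_of_subset hEF hp ω

theorem pr_and_mem_eq_sum (p : Ω → ℝ) (P : Ω → Prop) (Y : Ω → 𝒴) (S : Finset 𝒴) :
    pr p {ω | P ω ∧ Y ω ∈ S} = ∑ y ∈ S, pr p {ω | P ω ∧ Y ω = y} := by
  classical
  simp only [pr]
  rw [sum_comm]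
  refine sum_congr rfl fun ω _ => ?_
  by_cases hP : P ω <;> simp [Set.indicator_apply, hP]

theorem prEq_mul_condProb (hp : ∀ ω, 0 ≤ p ω) (X : Ω → 𝒳) (x : 𝒳) (Y : Ω → 𝒴) (y : 𝒴) :
    prEq p Y y * condProb p X x Y y = pr p {ω | X ω = x ∧ Y ω = y} := by
  have joint_le : pr p {ω | X ω = x ∧ Y ω = y} ≤ prEq p Y y := pr_mono hp fun _ hω => hω.2
  by_cases hy : prEq p Y y = 0
  · rw [hy, zero_mul]
    exact le_antisymm (pr_nonneg hp _) (joint_le.trans_eq hy)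
  · rw [condProb, if_neg hy, mul_div_cancel₀ _ hy]

theorem sum_prEq [Fintype 𝒳] (p : Ω → ℝ) (X : Ω → 𝒳) : ∑ x, prEq p X x = ∑ ω, p ω := by
  simpa [prEq, pr] using (pr_and_mem_eq_sum p (fun _ => True) X univ).symm

end Probability

section GuessingProbability

variable {Ω 𝒳 𝒴 𝒵 : Type*} [Fintype Ω] [Fintype 𝒳] [Nonempty 𝒳] [Fintype 𝒴] [Fintype 𝒵]
  {p : Ω → ℝ}

/-- The optimal probability of guessing `X` from `Y`: on seeing `y`, guess an `x` that maximizes the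
joint probability `P[X = x, Y = y]`. Joint rather than conditional probabilities avoid a case
distinction on `P[Y = y] = 0`. -/
noncomputable def guessingProb (p : Ω → ℝ) (X : Ω → 𝒳) (Y : Ω → 𝒴) : ℝ :=
  ∑ y, univ.sup' univ_nonempty fun x => pr p {ω | X ω = x ∧ Y ω = y}

theorem avgMinEntropy_eq_neg_logb_guessingProb (hp : ∀ ω, 0 ≤ p ω) (X : Ω → 𝒳) (Y : Ω → 𝒴) :
    avgMinEntropy p X Y = -logb 2 (guessingProb p X Y) := by
  have mul_sup'_condProb (y : 𝒴) :
      prEq p Y y * univ.sup' univ_nonempty (fun x => condProb p X x Y y) =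
        univ.sup' univ_nonempty fun x => pr p {ω | X ω = x ∧ Y ω = y} := by
    have prEq_nonneg : 0 ≤ prEq p Y y := pr_nonneg hp _
    simp only [mul₀_sup' prEq_nonneg, prEq_mul_condProb hp]
  simp only [avgMinEntropy, guessingProb, mul_sup'_condProb]

theorem prEq_le_guessingProb (p : Ω → ℝ) (X : Ω → 𝒳) (Y : Ω → 𝒴) (x : 𝒳) :
    prEq p X x ≤ guessingProb p X Y :=
  calc
    prEq p X x = ∑ y, pr p {ω | X ω = x ∧ Y ω = y} := by
      simpa [prEq] using pr_and_mem_eq_sum p (X · = x) Y univ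
    _ ≤ guessingProb p X Y := sum_le_sum fun y _ =>
        le_sup' (fun x => pr p {ω | X ω = x ∧ Y ω = y}) (mem_univ x)

theorem guessingProb_pos (hpos : 0 < ∑ ω, p ω) (X : Ω → 𝒳) (Y : Ω → 𝒴) :
    0 < guessingProb p X Y := by
  obtain ⟨x, -, hx⟩ : ∃ x ∈ univ, 0 < prEq p X x :=
    exists_lt_of_sum_lt (by simpa [sum_prEq] using hpos)
  exact hx.trans_le (prEq_le_guessingProb p X Y x)

theorem guessingProb_comp_le (p : Ω → ℝ) (X : Ω → 𝒳) (Y : Ω → 𝒴) (f : 𝒴 → 𝒵) :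
    guessingProb p X (fun ω => f (Y ω)) ≤ guessingProb p X Y := by
  classical
  have joint_comp (x : 𝒳) (z : 𝒵) : pr p {ω | X ω = x ∧ f (Y ω) = z} =
      ∑ y with f y = z, pr p {ω | X ω = x ∧ Y ω = y} := by
    simpa using pr_and_mem_eq_sum p (X · = x) Y {y | f y = z}
  calc
    guessingProb p X (fun ω => f (Y ω))
      = ∑ z, univ.sup' univ_nonempty fun x =>
          ∑ y with f y = z, pr p {ω | X ω = x ∧ Y ω = y} := by
        simp only [guessingProb, joint_comp]
    _ ≤ ∑ z, ∑ y with f y = z, univ.sup' univ_nonempty fun x =>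
          pr p {ω | X ω = x ∧ Y ω = y} :=
        sum_le_sum fun _ _ => sup'_le _ _ fun x _ =>
          sum_le_sum fun y _ =>
            le_sup' (fun x => pr p {ω | X ω = x ∧ Y ω = y}) (mem_univ x)
    _ = guessingProb p X Y := sum_fiberwise _ _ _

end GuessingProbability

theorem stmt_0 {Ω 𝒳 𝒴 𝒵 : Type*} [Fintype Ω]
    [Fintype 𝒳] [Nonempty 𝒳] [Fintype 𝒴] [Nonempty 𝒴] [Fintype 𝒵]
    (p : Ω → ℝ) (hp : ∀ ω, 0 ≤ p ω) (hsum : ∑ ω, p ω = 1)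
    (X : Ω → 𝒳) (Y : Ω → 𝒴) (f : 𝒴 → 𝒵) :
    avgMinEntropy p X Y ≤ avgMinEntropy p X (fun ω => f (Y ω)) := by
  have total_pos : 0 < ∑ ω, p ω := hsum ▸ one_pos
  rw [avgMinEntropy_eq_neg_logb_guessingProb hp, avgMinEntropy_eq_neg_logb_guessingProb hp]
  exact neg_le_neg <| logb_le_logb_of_le one_lt_two
    (guessingProb_pos total_pos X _) (guessingProb_comp_le p X Y f)
end

section
/- Let Ω be a finite probability space, and let X : Ω → 𝒳, Y : Ω → 𝒴, Z : Ω → 𝒵 be random variables with 𝒳, 𝒴, 𝒵 finite and nonempty. If the pair (X, Y) is independent of Z, then H̃∞(X | (Y, Z)) = H̃∞(X | Y). -/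
open Finset Real

/-!
Every value `(y, z)` of positive probability satisfies `P[X = x | Y = y, Z = z] = P[X = x | Y = y]`
as soon as `X` and `Z` are conditionally independent given `Y`. The best guess for `X` is then as
good after seeing `(y, z)` as after seeing `y`, and averaging over `z` merges the weights
`P[Y = y, Z = z]` into `P[Y = y]`. Independence of `(X, Y)` from `Z` is a special case of
conditional independence.
-/

section

variable {Ω 𝒳 𝒴 𝒵 : Type*} [Fintype Ω] {p : Ω → ℝ}

theorem pr_eq_zero_of_subset (hp : ∀ ω, 0 ≤ p ω) {E F : Set Ω} (hEF : E ⊆ F)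
    (hF : pr p F = 0) : pr p E = 0 := by
  have hle : pr p E ≤ pr p F :=
    Finset.sum_le_sum fun ω _ => Set.indicator_le_indicator_of_subset hEF hp ω
  have hnonneg : 0 ≤ pr p E :=
    Finset.sum_nonneg fun ω _ => Set.indicator_nonneg (fun _ _ => hp _) ω
  exact le_antisymm (hle.trans_eq hF) hnonneg

theorem sum_pr_inter_preimage_singleton [Fintype 𝒳] (p : Ω → ℝ) (X : Ω → 𝒳) (E : Set Ω) :
    ∑ x, pr p (E ∩ X ⁻¹' {x}) = pr p E := by
  classical
  unfold pr
  rw [Finset.sum_comm]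
  refine Finset.sum_congr rfl fun ω _ => ?_
  simp [Set.indicator_apply, ite_and]

theorem prEq_prodMk (p : Ω → ℝ) (X : Ω → 𝒳) (Y : Ω → 𝒴) (x : 𝒳) (y : 𝒴) :
    prEq p (fun ω => (X ω, Y ω)) (x, y) = pr p {ω | X ω = x ∧ Y ω = y} := by
  simp only [prEq, Prod.mk.injEq]

theorem sum_prEq_prodMk_right [Fintype 𝒴] (p : Ω → ℝ) (X : Ω → 𝒳) (Y : Ω → 𝒴) (x : 𝒳) :
    ∑ y, prEq p (fun ω => (X ω, Y ω)) (x, y) = prEq p X x := by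
  simp only [prEq_prodMk]
  exact sum_pr_inter_preimage_singleton p Y {ω | X ω = x}

theorem sum_prEq_prodMk_left [Fintype 𝒳] (p : Ω → ℝ) (X : Ω → 𝒳) (Y : Ω → 𝒴) (y : 𝒴) :
    ∑ x, prEq p (fun ω => (X ω, Y ω)) (x, y) = prEq p Y y := by
  simp only [prEq_prodMk, and_comm, ← sum_prEq_prodMk_right p Y X y]

theorem prEq_prodMk_eq_zero (hp : ∀ ω, 0 ≤ p ω) {X : Ω → 𝒳} {x : 𝒳} (hx : prEq p X x = 0)
    (Y : Ω → 𝒴) (y : 𝒴) : prEq p (fun ω => (X ω, Y ω)) (x, y) = 0 := by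
  rw [prEq_prodMk]
  exact pr_eq_zero_of_subset hp (fun _ hω => hω.1) hx

theorem condProb_eq_div (p : Ω → ℝ) (X : Ω → 𝒳) (x : 𝒳) (Y : Ω → 𝒴) (y : 𝒴) :
    condProb p X x Y y = prEq p (fun ω => (X ω, Y ω)) (x, y) / prEq p Y y := by
  rw [condProb, prEq_prodMk, ite_eq_right_iff.mpr]
  intro hy
  rw [hy, div_zero]

/-- `X → Y → Z` is a Markov chain: `X` and `Z` are conditionally independent given `Y`. The
condition is cleared of denominators, so that it makes sense at values `y` of probability zero. -/
def IsMarkovChain (p : Ω → ℝ) (X : Ω → 𝒳) (Y : Ω → 𝒴) (Z : Ω → 𝒵) : Prop :=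
  ∀ x y z, prEq p (fun ω => (X ω, Y ω, Z ω)) (x, y, z) * prEq p Y y =
    prEq p (fun ω => (X ω, Y ω)) (x, y) * prEq p (fun ω => (Y ω, Z ω)) (y, z)

variable {X : Ω → 𝒳} {Y : Ω → 𝒴} {Z : Ω → 𝒵}

theorem prEq_prodMk_eq_mul_of_indep [Finite 𝒳]
    (hindep : ∀ x y z, prEq p (fun ω => (X ω, Y ω, Z ω)) (x, y, z) =
      prEq p (fun ω => (X ω, Y ω)) (x, y) * prEq p Z z) (y : 𝒴) (z : 𝒵) :
    prEq p (fun ω => (Y ω, Z ω)) (y, z) = prEq p Y y * prEq p Z z := by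
  cases nonempty_fintype 𝒳
  calc
    prEq p (fun ω => (Y ω, Z ω)) (y, z)
    _ = ∑ x, prEq p (fun ω => (X ω, Y ω, Z ω)) (x, y, z) :=
        (sum_prEq_prodMk_left p X (fun ω => (Y ω, Z ω)) (y, z)).symm
    _ = (∑ x, prEq p (fun ω => (X ω, Y ω)) (x, y)) * prEq p Z z := by
        simp only [hindep, Finset.sum_mul]
    _ = prEq p Y y * prEq p Z z := by rw [sum_prEq_prodMk_left]

theorem isMarkovChain_of_indep [Finite 𝒳]
    (hindep : ∀ x y z, prEq p (fun ω => (X ω, Y ω, Z ω)) (x, y, z) =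
      prEq p (fun ω => (X ω, Y ω)) (x, y) * prEq p Z z) :
    IsMarkovChain p X Y Z := by
  intro x y z
  rw [hindep, prEq_prodMk_eq_mul_of_indep hindep]
  ring

theorem IsMarkovChain.condProb_prodMk (h : IsMarkovChain p X Y Z) (hp : ∀ ω, 0 ≤ p ω)
    {y : 𝒴} {z : 𝒵} (hyz : prEq p (fun ω => (Y ω, Z ω)) (y, z) ≠ 0) (x : 𝒳) :
    condProb p X x (fun ω => (Y ω, Z ω)) (y, z) = condProb p X x Y y := by
  have hy : prEq p Y y ≠ 0 := fun hy => hyz (prEq_prodMk_eq_zero hp hy Z z)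
  rw [condProb_eq_div, condProb_eq_div, div_eq_div_iff hyz hy]
  exact h x y z

/-- The probability of guessing `X` correctly with the best strategy once `Y = y` is known; its
average over `y` is the quantity inside the logarithm of `avgMinEntropy p X Y`. -/
noncomputable def guessProb [Fintype 𝒳] [Nonempty 𝒳] (p : Ω → ℝ) (X : Ω → 𝒳) (Y : Ω → 𝒴)
    (y : 𝒴) : ℝ :=
  Finset.univ.sup' Finset.univ_nonempty fun x => condProb p X x Y y

theorem avgMinEntropy_eq_neg_logb_sum_guessProb [Fintype 𝒳] [Nonempty 𝒳] [Fintype 𝒴]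
    (p : Ω → ℝ) (X : Ω → 𝒳) (Y : Ω → 𝒴) :
    avgMinEntropy p X Y = -Real.logb 2 (∑ y, prEq p Y y * guessProb p X Y y) :=
  rfl

theorem IsMarkovChain.prEq_mul_guessProb_prodMk [Fintype 𝒳] [Nonempty 𝒳]
    (h : IsMarkovChain p X Y Z) (hp : ∀ ω, 0 ≤ p ω) (y : 𝒴) (z : 𝒵) :
    prEq p (fun ω => (Y ω, Z ω)) (y, z) * guessProb p X (fun ω => (Y ω, Z ω)) (y, z) =
      prEq p (fun ω => (Y ω, Z ω)) (y, z) * guessProb p X Y y := by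
  by_cases hyz : prEq p (fun ω => (Y ω, Z ω)) (y, z) = 0
  · rw [hyz, zero_mul, zero_mul]
  · simp only [guessProb, h.condProb_prodMk hp hyz]

theorem IsMarkovChain.sum_prEq_mul_guessProb_prodMk [Fintype 𝒳] [Nonempty 𝒳] [Fintype 𝒵]
    (h : IsMarkovChain p X Y Z) (hp : ∀ ω, 0 ≤ p ω) (y : 𝒴) :
    ∑ z, prEq p (fun ω => (Y ω, Z ω)) (y, z) * guessProb p X (fun ω => (Y ω, Z ω)) (y, z) =
      prEq p Y y * guessProb p X Y y := by
  simp only [h.prEq_mul_guessProb_prodMk hp, ← Finset.sum_mul, sum_prEq_prodMk_right]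

end

theorem stmt_1_general {Ω 𝒳 𝒴 𝒵 : Type*} [Fintype Ω]
    [Fintype 𝒳] [Nonempty 𝒳] [Fintype 𝒴] [Fintype 𝒵]
    (p : Ω → ℝ) (hp : ∀ ω, 0 ≤ p ω) (X : Ω → 𝒳) (Y : Ω → 𝒴) (Z : Ω → 𝒵)
    (hMarkov : IsMarkovChain p X Y Z) :
    avgMinEntropy p X (fun ω => (Y ω, Z ω)) = avgMinEntropy p X Y := by
  simp only [avgMinEntropy_eq_neg_logb_sum_guessProb, Fintype.sum_prod_type,
    hMarkov.sum_prEq_mul_guessProb_prodMk hp]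

theorem stmt_1 {Ω 𝒳 𝒴 𝒵 : Type*} [Fintype Ω]
    [Fintype 𝒳] [Nonempty 𝒳] [Fintype 𝒴] [Nonempty 𝒴] [Fintype 𝒵] [Nonempty 𝒵]
    (p : Ω → ℝ) (hp : ∀ ω, 0 ≤ p ω) (hsum : ∑ ω, p ω = 1)
    (X : Ω → 𝒳) (Y : Ω → 𝒴) (Z : Ω → 𝒵)
    (hindep : ∀ (x : 𝒳) (y : 𝒴) (z : 𝒵),
      prEq p (fun ω => (X ω, Y ω, Z ω)) (x, y, z) =
        prEq p (fun ω => (X ω, Y ω)) (x, y) * prEq p Z z) :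
    avgMinEntropy p X (fun ω => (Y ω, Z ω)) = avgMinEntropy p X Y :=
  stmt_1_general p hp X Y Z (isMarkovChain_of_indep hindep)
end

section
/- Let d : ℕ → ℕ be a function such that d(n) · log₂(n) = o(n). Then the function n ↦ |B_n^{d(n)}| · 2^{−n} = (Σ_{k=0}^{d(n)−1} C(n, k)) · 2^{−n} is negligible: for every c ∈ ℕ there exists N such that for all n ≥ N, (Σ_{k=0}^{d(n)−1} C(n, k)) · 2^{−n} ≤ n^{−c}. -/
open Finset Real

/-!
For `n ≥ 2` the size of the ball is at most `∑ k < d, n ^ k < n ^ d = 2 ^ (d * log₂ n)`. Once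
`d * log₂ n ≤ r * n` with a fixed `r < 1`, the density of the ball is at most `(2 ^ (r - 1)) ^ n`,
which decays exponentially and hence faster than every negative power of `n`.
-/

section

open Asymptotics Filter

theorem superpolynomialDecay_const_pow {q : ℝ} (hq : |q| < 1) :
    SuperpolynomialDecay atTop (fun n : ℕ => (n : ℝ)) (q ^ ·) :=
  fun k => tendsto_pow_const_mul_const_pow_of_abs_lt_one k hq

theorem eventually_le_rpow_neg_of_superpolynomialDecay {α : Type*} {l : Filter α} {k f : α → ℝ}
    (hf : SuperpolynomialDecay l k f) (hk : ∀ᶠ a in l, 0 < k a) (c : ℕ) :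
    ∀ᶠ a in l, f a ≤ k a ^ (-(c : ℝ)) := by
  filter_upwards [hk, (hf c).eventually_le_const zero_lt_one] with a hka hfa
  rw [Real.rpow_neg hka.le, Real.rpow_natCast, ← one_div]
  exact (le_div_iff₀' (pow_pos hka c)).2 hfa

theorem sum_range_choose_lt_pow {n : ℕ} (hn : 2 ≤ n) (d : ℕ) :
    ∑ k ∈ range d, n.choose k < n ^ d :=
  calc
    ∑ k ∈ range d, n.choose k ≤ ∑ k ∈ range d, n ^ k := sum_le_sum fun k _ => n.choose_le_pow k
    _ < n ^ d := Nat.geomSum_lt hn fun _ => mem_range.1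

theorem sum_range_choose_mul_rpow_neg_le {b r : ℝ} {n d : ℕ} (hb : 1 < b) (hn : 2 ≤ n)
    (hd : (d : ℝ) * logb b n / n ≤ r) :
    ((∑ k ∈ range d, n.choose k : ℕ) : ℝ) * b ^ (-(n : ℝ)) ≤ (b ^ (r - 1)) ^ n := by
  have hb₀ : 0 < b := zero_lt_one.trans hb
  have hn₀ : (0 : ℝ) < n := by exact_mod_cast zero_lt_two.trans_le hn
  have pow_le : (n : ℝ) ^ d ≤ b ^ (r * n) := by
    rwa [← logb_le_iff_le_rpow hb (pow_pos hn₀ d), logb_pow, ← div_le_iff₀ hn₀]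
  calc
    ((∑ k ∈ range d, n.choose k : ℕ) : ℝ) * b ^ (-(n : ℝ))
        ≤ (n : ℝ) ^ d * b ^ (-(n : ℝ)) := by
      gcongr
      exact_mod_cast (sum_range_choose_lt_pow hn d).le
    _ ≤ b ^ (r * n) * b ^ (-(n : ℝ)) := by gcongr
    _ = b ^ ((r - 1) * n) := by rw [← rpow_add hb₀]; ring_nf
    _ = (b ^ (r - 1)) ^ n := rpow_mul_natCast hb₀.le _ n

theorem stmt_12_general {b r : ℝ} (hb : 1 < b) (hr : r < 1) (d : ℕ → ℕ)
    (h : ∀ᶠ n : ℕ in atTop, (d n : ℝ) * logb b n / n ≤ r) :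
    SuperpolynomialDecay atTop (fun n : ℕ => (n : ℝ))
      fun n => ((∑ k ∈ range (d n), n.choose k : ℕ) : ℝ) * b ^ (-(n : ℝ)) := by
  have hb₀ : 0 < b := zero_lt_one.trans hb
  have ratio_lt_one : |b ^ (r - 1)| < 1 := by
    rw [abs_of_pos (rpow_pos_of_pos hb₀ _)]
    exact rpow_lt_one_of_one_lt_of_neg hb (sub_neg.2 hr)
  refine (superpolynomialDecay_zero _ _).trans_eventuallyLE (.of_forall fun n => n.cast_nonneg)
    (superpolynomialDecay_const_pow ratio_lt_one)
    (.of_forall fun n => mul_nonneg (Nat.cast_nonneg _) (rpow_nonneg hb₀.le _)) ?_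
  filter_upwards [h, eventually_ge_atTop 2] with n hd hn
  exact sum_range_choose_mul_rpow_neg_le hb hn hd

end

theorem stmt_12 (d : ℕ → ℕ)
    (h : Filter.Tendsto (fun n : ℕ => ((d n : ℝ) * Real.logb 2 n) / n)
      Filter.atTop (nhds 0)) :
    ∀ c : ℕ, ∃ N : ℕ, ∀ n ≥ N,
      ((∑ k ∈ Finset.range (d n), n.choose k : ℕ) : ℝ) * (2 : ℝ) ^ (-(n : ℝ)) ≤
        (n : ℝ) ^ (-(c : ℝ)) := by
  have decay := stmt_12_general one_lt_two one_half_lt_one d (h.eventually_le_const one_half_pos)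
  exact fun c => Filter.eventually_atTop.1 <| eventually_le_rpow_neg_of_superpolynomialDecay decay
    ((Filter.eventually_gt_atTop 0).mono fun _ => Nat.cast_pos.2) c
end
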